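/- Fix K ≥ 2, n > 0, a class index k, and fixed positive distances d_j > 0 for all j ≠ k. Consider the harmonic probability p_k(t) = t^{-n} / (t^{-n} + Σ_{j ≠ k} d_j^{-n}) as a function of the distance t > 0 to the correct prototype. Then p_k(t) → 1 and −log p_k(t) → 0 as t → 0+; that is, the per-sample harmonic loss converges to 0 as the representation approaches the correct class prototype (a finite convergence point). -/

import Mathlib

open Finset Filter

/-- If `u` tends to infinity, then `u / (u + c)` tends to `1` for every constant `c`. -/
theorem tendsto_div_add_const_of_atTop {α : Type*} {l : Filter α} {u : α → ℝ}
    (hu : Tendsto u l atTop) (c : ℝ) :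
    Tendsto (fun x => u x / (u x + c)) l (nhds 1) := by
  have hadd : Tendsto (fun x => u x + c) l atTop := tendsto_atTop_add_const_right l c hu
  have hsub : Tendsto (fun x => 1 - c / (u x + c)) l (nhds 1) := by
    simpa using (hadd.const_div_atTop c).const_sub 1
  refine hsub.congr' ?_
  filter_upwards [hadd.eventually_gt_atTop 0] with x hx
  have hne := hx.ne'
  field_simp
  ring

/-- **Finite convergence point of the per-sample harmonic loss.**
Fix `K ≥ 2`, `n > 0`, a class index `k`, and fixed positive distances
`dist j > 0` for `j ≠ k`. As the distance `t > 0` to the correct prototype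
tends to `0` from the right, the harmonic probability
`p_k(t) = t^(-n) / (t^(-n) + ∑_{j ≠ k} dist j ^(-n))` tends to `1` and the
per-sample harmonic loss `-log p_k(t)` tends to `0`. -/
theorem harmonic_loss_finite_convergence_point
    (K : ℕ) (hK : 2 ≤ K) (n : ℝ) (hn : 0 < n) (k : Fin K)
    (dist : Fin K → ℝ) (hd : ∀ j, j ≠ k → 0 < dist j) :
    Tendsto
      (fun t : ℝ => t ^ (-n) /
        (t ^ (-n) + ∑ j ∈ Finset.univ.erase k, dist j ^ (-n)))
      (nhdsWithin 0 (Set.Ioi 0)) (nhds 1) ∧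
    Tendsto
      (fun t : ℝ => -Real.log (t ^ (-n) /
        (t ^ (-n) + ∑ j ∈ Finset.univ.erase k, dist j ^ (-n))))
      (nhdsWithin 0 (Set.Ioi 0)) (nhds 0) := by
  have hp := tendsto_div_add_const_of_atTop (tendsto_rpow_neg_nhdsGT_zero (neg_lt_zero.mpr hn))
    (∑ j ∈ Finset.univ.erase k, dist j ^ (-n))
  exact ⟨hp, by simpa using (hp.log one_ne_zero).neg⟩
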